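/- arXiv:0903.4508 — 2 statements merged into one kernel-verified Lean document; each statement's English description precedes it below -/
import Mathlib

section
/- With the weighted uniform initial qubit φ^WU on the tree and the half-line walk with s = −1, the distance distribution of the tree walk equals the position distribution of the half-line walk: for all t ≥ 0 and x ∈ ℤ₊, Σ_{g reduced word, |g| = x} Σ_{j=0}^{κ−1} |α_t(g, j)|² = P(X_t = x). -/
noncomputable section

/-- Left multiplication of a reduced word by a letter:
`j · g` removes the first letter if it equals `j`, otherwise prepends `j`. -/
def lmul (j : ℕ) (g : List ℕ) : List ℕ :=
  match g with
  | [] => [j]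
  | k :: rest => if k = j then rest else j :: k :: rest

/-- `g` is a reduced word over the alphabet `{0, …, κ-1}`:
all letters are `< κ` and no two consecutive letters are equal. -/
def WordReduced (κ : ℕ) (g : List ℕ) : Prop :=
  (∀ l ∈ g, l < κ) ∧ g.Chain' (· ≠ ·)

/-- Grover-walk amplitudes on the Cayley tree with initial qubit `φ`:
`alpha κ φ 0 g j = φ j` if `g = e` and `0` otherwise, and
`alpha κ φ (t+1) g j = ∑_{k<κ} (2/κ - δ_{jk}) · alpha κ φ t (j·g) k`. -/
noncomputable def alpha (κ : ℕ) (φ : ℕ → ℂ) : ℕ → List ℕ → ℕ → ℂ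
  | 0, g, j => if g = [] then φ j else 0
  | t + 1, g, j =>
      ∑ k ∈ Finset.range κ, ((2 / (κ : ℂ)) - (if j = k then 1 else 0)) * alpha κ φ t (lmul j g) k

/-- `ω = exp(2πi/κ)`. -/
noncomputable def omega (κ : ℕ) : ℂ := Complex.exp (2 * Real.pi * Complex.I / κ)

/-- The weighted uniform initial qubit `φ^WU(j) = ω^j/√κ`. -/
noncomputable def phiWU (κ : ℕ) : ℕ → ℂ := fun j => omega κ ^ j / ((Real.sqrt κ : ℝ) : ℂ)

/-- Half-line quantum walk `Ψ_t(x) = (Ψ_t^L(x), Ψ_t^R(x))` with a reflecting wall at the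
origin, coin parameters `a`, `b` and wall sign `s`:
`Ψ_0(0) = (1,0)`, `Ψ_0(x) = (0,0)` for `x ≥ 1`, and
`Ψ_{t+1}^L(x) = a·Ψ_t^L(x+1) − b·Ψ_t^R(x+1)`,
`Ψ_{t+1}^R(x) = b·Ψ_t^L(x−1) + a·Ψ_t^R(x−1)` for `x ≥ 2`,
`Ψ_{t+1}^R(1) = s·Ψ_t^L(0)`, `Ψ_{t+1}^R(0) = 0`. -/
noncomputable def psi (a b s : ℝ) : ℕ → ℕ → ℂ × ℂ
  | 0, x => if x = 0 then (1, 0) else (0, 0)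
  | t + 1, x =>
      ((a : ℂ) * (psi a b s t (x + 1)).1 - (b : ℂ) * (psi a b s t (x + 1)).2,
       if x = 0 then 0
       else if x = 1 then (s : ℂ) * (psi a b s t 0).1
       else (b : ℂ) * (psi a b s t (x - 1)).1 + (a : ℂ) * (psi a b s t (x - 1)).2)

/-- Position distribution `P(X_t = x) = |Ψ_t^L(x)|² + |Ψ_t^R(x)|²`. -/
noncomputable def prob (a b s : ℝ) (t x : ℕ) : ℝ :=
  ‖(psi a b s t x).1‖ ^ 2 + ‖(psi a b s t x).2‖ ^ 2

/-!
An initial qubit `φ` that is an eigenvector of the Grover coin, with eigenvalue `s`, is reflected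
at the root exactly as the half-line walk is reflected at its wall of sign `s`. By induction on time
the amplitude at a word `g ≠ e` then depends only on `|g|`, on whether the arc at `g` points back to
the root, and on the last letter `l` of `g` (the branch containing `g`). It is `φ l` times the
half-line amplitude at `|g|`, divided by the square root of the number of arcs of its kind in a
branch, and summing squared norms undoes this normalization. The weighted uniform qubit sums to
zero, so it is an eigenvector with eigenvalue `-1`.
-/

section ReducedWords

variable {κ j : ℕ} {g : List ℕ}

lemma lmul_cons_self (j : ℕ) (g : List ℕ) : lmul j (j :: g) = g := if_pos rfl

lemma lmul_of_head?_ne (hj : g.head? ≠ some j) : lmul j g = j :: g := by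
  cases g with
  | nil => rfl
  | cons p g => exact if_neg (by simpa using hj)

lemma wordReduced_nil : WordReduced κ [] := ⟨List.forall_mem_nil _, List.isChain_nil⟩

lemma wordReduced_cons : WordReduced κ (j :: g) ↔ j < κ ∧ g.head? ≠ some j ∧ WordReduced κ g := by
  have hhead : (∀ y ∈ g.head?, j ≠ y) ↔ g.head? ≠ some j := by
    cases g <;> simp [eq_comm]
  change (_ ∧ List.IsChain _ _) ↔ _ ∧ _ ∧ _ ∧ List.IsChain _ _
  rw [List.forall_mem_cons, List.isChain_cons, hhead]
  tauto

lemma wordReduced_ofFn_iff {n : ℕ} (f : Fin n → Fin κ) :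
    WordReduced κ (List.ofFn fun i ↦ (f i : ℕ)) ↔
      (List.ofFn fun i ↦ (f i : ℕ)).IsChain (· ≠ ·) :=
  and_iff_right ((List.forall_mem_ofFn_iff).2 fun i ↦ (f i).isLt)

lemma isChain_ne_ofFn_cons_iff {α : Type*} {n : ℕ} (c : α) (f : Fin (n + 1) → α) :
    (List.ofFn (Fin.cons c f : Fin (n + 2) → α)).IsChain (· ≠ ·) ↔
      c ≠ f 0 ∧ (List.ofFn f).IsChain (· ≠ ·) := by
  simp [List.ofFn_succ]

lemma sum_isChain_ne_last {α M : Type*} [Fintype α] [DecidableEq α] [AddCommMonoid M]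
    (F : α → M) (n : ℕ) :
    ∑ f : Fin (n + 1) → α with (List.ofFn f).IsChain (· ≠ ·), F (f (Fin.last n)) =
      (Fintype.card α - 1) ^ n • ∑ c, F c := by
  induction n with
  | zero =>
    simpa using (Equiv.funUnique (Fin 1) α).sum_comp F
  | succ n ih =>
    have extensions (f : Fin (n + 1) → α) :
        ∑ c, (if c ≠ f 0 ∧ (List.ofFn f).IsChain (· ≠ ·) then F (f (Fin.last n)) else 0) =
          (Fintype.card α - 1) •
            if (List.ofFn f).IsChain (· ≠ ·) then F (f (Fin.last n)) else 0 := by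
      by_cases hf : (List.ofFn f).IsChain (· ≠ ·)
      · simp only [hf, and_true, if_true, ← Finset.sum_filter, Finset.sum_const,
          Finset.filter_ne', Finset.card_erase_of_mem (Finset.mem_univ _), Finset.card_univ]
      · simp only [hf, and_false, if_false, Finset.sum_const_zero, smul_zero]
    rw [Finset.sum_filter, ← (Fin.consEquiv fun _ ↦ α).sum_comp, Fintype.sum_prod_type_right]
    simp only [Fin.consEquiv, Equiv.coe_fn_mk, isChain_ne_ofFn_cons_iff, Fin.cons_last, extensions]
    rw [← Finset.smul_sum, ← Finset.sum_filter, ih, pow_succ', mul_smul]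

lemma isChain_ne_ofFn_val_iff {n : ℕ} (f : Fin n → Fin κ) :
    (List.ofFn fun i ↦ (f i : ℕ)).IsChain (· ≠ ·) ↔ (List.ofFn f).IsChain (· ≠ ·) := by
  simp only [List.isChain_ofFn, ne_eq, Fin.val_inj]

lemma sum_wordReduced_last {M : Type*} [AddCommMonoid M] (F : ℕ → M) (κ n : ℕ) :
    ∑ f : Fin (n + 1) → Fin κ with (List.ofFn fun i ↦ (f i : ℕ)).IsChain (· ≠ ·),
        F (f (Fin.last n)) = (κ - 1) ^ n • ∑ l ∈ Finset.range κ, F l := by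
  simp only [isChain_ne_ofFn_val_iff, sum_isChain_ne_last (fun c : Fin κ ↦ F c),
    Fintype.card_fin, Fin.sum_univ_eq_sum_range]

end ReducedWords

section GroverCoin

variable {κ j p : ℕ}

/-- The Grover coin `(2/κ) J - I` on `ℂ^κ`, with vectors encoded as functions on `ℕ` of which only
the values below `κ` matter. It is the local step of the tree walk. -/
def groverCoin (κ : ℕ) (v : ℕ → ℂ) (j : ℕ) : ℂ :=
  ∑ k ∈ Finset.range κ, (2 / (κ : ℂ) - if j = k then 1 else 0) * v k

lemma alpha_succ (κ : ℕ) (φ : ℕ → ℂ) (t : ℕ) (g : List ℕ) (j : ℕ) :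
    alpha κ φ (t + 1) g j = groverCoin κ (alpha κ φ t (lmul j g)) j := rfl

lemma groverCoin_congr {v w : ℕ → ℂ} (h : ∀ k < κ, v k = w k) (j : ℕ) :
    groverCoin κ v j = groverCoin κ w j :=
  Finset.sum_congr rfl fun k hk ↦ by rw [h k (Finset.mem_range.1 hk)]

lemma groverCoin_eq (hj : j < κ) (v : ℕ → ℂ) :
    groverCoin κ v j = 2 / κ * ∑ k ∈ Finset.range κ, v k - v j := by
  simp [groverCoin, sub_mul, Finset.sum_sub_distrib, Finset.mul_sum, hj]

lemma groverCoin_mul_const (v : ℕ → ℂ) (c : ℂ) (j : ℕ) :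
    groverCoin κ (fun k ↦ v k * c) j = groverCoin κ v j * c := by
  simp only [groverCoin, Finset.sum_mul, mul_assoc]

lemma sum_ite_eq_add_card_sub_one_mul {ι R : Type*} [DecidableEq ι] [Ring R] {s : Finset ι} {i : ι}
    (hi : i ∈ s) (r l : R) :
    ∑ k ∈ s, (if i = k then r else l) = r + ((s.card : R) - 1) * l := by
  have hrest : ∑ k ∈ s.erase i, (if i = k then r else l) = (s.erase i).card • l :=
    Finset.sum_eq_card_nsmul fun k hk ↦ if_neg (Finset.ne_of_mem_erase hk).symm
  rw [← Finset.add_sum_erase s _ hi, if_pos rfl, hrest, nsmul_eq_mul,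
    Finset.cast_card_erase_of_mem hi]

lemma groverCoin_const_mul_ite (hp : p < κ) (hj : j < κ) (c r l : ℂ) :
    groverCoin κ (fun k ↦ c * if p = k then r else l) j =
      c * (2 / κ * (r + ((κ : ℂ) - 1) * l) - if p = j then r else l) := by
  rw [groverCoin_eq hj, ← Finset.mul_sum,
    sum_ite_eq_add_card_sub_one_mul (Finset.mem_range.2 hp), Finset.card_range]
  ring

end GroverCoin

section HalfLine

variable (a b s : ℝ) (t : ℕ)

lemma psi_succ_fst (x : ℕ) :
    (psi a b s (t + 1) x).1 = a * (psi a b s t (x + 1)).1 - b * (psi a b s t (x + 1)).2 := rfl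

lemma psi_succ_one_snd : (psi a b s (t + 1) 1).2 = s * (psi a b s t 0).1 := rfl

lemma psi_succ_add_two_snd (x : ℕ) :
    (psi a b s (t + 1) (x + 2)).2 =
      b * (psi a b s t (x + 1)).1 + a * (psi a b s t (x + 1)).2 := rfl

lemma psi_zero_snd : (psi a b s t 0).2 = 0 := by
  cases t <;> rfl

lemma prob_zero : prob a b s t 0 = ‖(psi a b s t 0).1‖ ^ 2 := by
  simp [prob, psi_zero_snd]

end HalfLine

/-- The half-line amplitudes spread over the arcs of the tree, with `q = √(κ - 1)`, as the candidate
for `alpha`. An arc `(g, j)` points towards the root when `j` is the first letter of `g`, and then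
carries the `R` amplitude; all other arcs carry the `L` amplitude. The last letter of `g` names the
branch of the tree containing `g`. -/
def psiLift (q a b s : ℝ) (φ : ℕ → ℂ) (t : ℕ) : List ℕ → ℕ → ℂ
  | [], j => φ j * (psi a b s t 0).1
  | p :: g, j =>
      φ ((p :: g).getLast (List.cons_ne_nil p g)) *
        if p = j then (psi a b s t (g.length + 1)).2 / (q : ℂ) ^ g.length
        else (psi a b s t (g.length + 1)).1 / (q : ℂ) ^ (g.length + 1)

section Lift

variable {κ : ℕ} {φ : ℕ → ℂ} {q a b s : ℝ}

lemma psiLift_of_head?_ne (t : ℕ) {g : List ℕ} {j : ℕ} (hj : g.head? ≠ some j) :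
    psiLift q a b s φ t g j =
      φ ((j :: g).getLast (List.cons_ne_nil j g)) *
        ((psi a b s t g.length).1 / (q : ℂ) ^ g.length) := by
  cases g with
  | nil => simp [psiLift]
  | cons p g =>
    have hpj : p ≠ j := by simpa using hj
    simp [psiLift, hpj]

lemma alpha_zero_eq_psiLift (g : List ℕ) (j : ℕ) :
    alpha κ φ 0 g j = psiLift q a b s φ 0 g j := by
  cases g <;> simp [alpha, psiLift, psi]

lemma groverCoin_psiLift_nil {j : ℕ} (hφ : groverCoin κ φ j = s * φ j) (t : ℕ) :
    groverCoin κ (psiLift q a b s φ t []) j = psiLift q a b s φ (t + 1) [j] j := by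
  calc groverCoin κ (psiLift q a b s φ t []) j
      = groverCoin κ φ j * (psi a b s t 0).1 := groverCoin_mul_const φ _ j
    _ = φ j * (s * (psi a b s t 0).1) := by rw [hφ]; ring
    _ = psiLift q a b s φ (t + 1) [j] j := by simp [psiLift, psi_succ_one_snd]

lemma groverCoin_psiLift_cons {p j : ℕ} (hp : p < κ) (hj : j < κ) (t : ℕ) (g : List ℕ) :
    groverCoin κ (psiLift q a b s φ t (p :: g)) j =
      φ ((p :: g).getLast (List.cons_ne_nil p g)) *
        (2 / κ * ((psi a b s t (g.length + 1)).2 / (q : ℂ) ^ g.length +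
            ((κ : ℂ) - 1) * ((psi a b s t (g.length + 1)).1 / (q : ℂ) ^ (g.length + 1))) -
          if p = j then (psi a b s t (g.length + 1)).2 / (q : ℂ) ^ g.length
          else (psi a b s t (g.length + 1)).1 / (q : ℂ) ^ (g.length + 1)) :=
  groverCoin_const_mul_ite hp hj _ _ _

lemma groverCoin_psiLift_toward_root (hq₀ : q ≠ 0) (hq : q ^ 2 = κ - 1) (ha : a = 2 * q / κ)
    (hb : b = (κ - 2) / κ) {g : List ℕ} {j : ℕ} (hj : j < κ) (hjg : g.head? ≠ some j) (t : ℕ) :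
    groverCoin κ (psiLift q a b s φ t (j :: g)) j = psiLift q a b s φ (t + 1) g j := by
  have hκ : (κ : ℂ) ≠ 0 := by exact_mod_cast (Nat.zero_lt_of_lt hj).ne'
  have hq₀c : (q : ℂ) ≠ 0 := by exact_mod_cast hq₀
  have hqc : (κ : ℂ) - 1 = (q : ℂ) ^ 2 := by exact_mod_cast congrArg Complex.ofReal hq.symm
  have hac : (a : ℂ) = 2 * q / κ := by exact_mod_cast congrArg Complex.ofReal ha
  have hbc : (b : ℂ) = (κ - 2) / κ := by exact_mod_cast congrArg Complex.ofReal hb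
  rw [groverCoin_psiLift_cons hj hj, if_pos rfl, psiLift_of_head?_ne _ hjg, psi_succ_fst, hqc, hac,
    hbc]
  congr 1
  field_simp
  ring

lemma groverCoin_psiLift_away_from_root (hq₀ : q ≠ 0) (hq : q ^ 2 = κ - 1) (ha : a = 2 * q / κ)
    (hb : b = (κ - 2) / κ) {g : List ℕ} {p j : ℕ} (hp : p < κ) (hj : j < κ) (hpj : p ≠ j)
    (t : ℕ) :
    groverCoin κ (psiLift q a b s φ t (p :: g)) j =
      psiLift q a b s φ (t + 1) (j :: p :: g) j := by
  have hκ : (κ : ℂ) ≠ 0 := by exact_mod_cast (Nat.zero_lt_of_lt hj).ne'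
  have hq₀c : (q : ℂ) ≠ 0 := by exact_mod_cast hq₀
  have hqc : (κ : ℂ) = (q : ℂ) ^ 2 + 1 := by
    exact_mod_cast congrArg Complex.ofReal (sub_eq_iff_eq_add.1 hq.symm)
  have hac : (a : ℂ) = 2 * q / κ := by exact_mod_cast congrArg Complex.ofReal ha
  have hbc : (b : ℂ) = (κ - 2) / κ := by exact_mod_cast congrArg Complex.ofReal hb
  rw [groverCoin_psiLift_cons hp hj, if_neg hpj, psiLift, if_pos rfl, List.getLast_cons_cons,
    List.length_cons, psi_succ_add_two_snd, hac, hbc]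
  rw [hqc] at hκ ⊢
  congr 1
  field_simp
  ring

theorem alpha_eq_psiLift (hq₀ : q ≠ 0) (hq : q ^ 2 = κ - 1) (ha : a = 2 * q / κ)
    (hb : b = (κ - 2) / κ) (hφ : ∀ j < κ, groverCoin κ φ j = s * φ j) (t : ℕ) {g : List ℕ}
    (hg : WordReduced κ g) {j : ℕ} (hj : j < κ) :
    alpha κ φ t g j = psiLift q a b s φ t g j := by
  induction t generalizing g j with
  | zero => exact alpha_zero_eq_psiLift g j
  | succ t ih =>
    have step {h : List ℕ} (hh : WordReduced κ h) (hlmul : lmul j g = h) :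
        alpha κ φ (t + 1) g j = groverCoin κ (psiLift q a b s φ t h) j := by
      rw [alpha_succ, hlmul, groverCoin_congr fun k hk ↦ ih hh hk]
    by_cases hhead : g.head? = some j
    · obtain ⟨h, rfl⟩ := List.head?_eq_some_iff.1 hhead
      obtain ⟨-, hjh, hh⟩ := wordReduced_cons.1 hg
      rw [step hh (lmul_cons_self j h)]
      cases h with
      | nil => exact groverCoin_psiLift_nil (hφ j hj) t
      | cons p h =>
        exact groverCoin_psiLift_away_from_root hq₀ hq ha hb (wordReduced_cons.1 hh).1 hj
          (by simpa using hjh) t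
    · rw [step (wordReduced_cons.2 ⟨hj, hhead, hg⟩) (lmul_of_head?_ne hhead)]
      exact groverCoin_psiLift_toward_root hq₀ hq ha hb hj hhead t

lemma sum_norm_sq_psiLift_nil (t : ℕ) :
    ∑ j ∈ Finset.range κ, ‖psiLift q a b s φ t [] j‖ ^ 2 =
      (∑ j ∈ Finset.range κ, ‖φ j‖ ^ 2) * prob a b s t 0 := by
  simp only [psiLift, norm_mul, mul_pow, prob_zero, Finset.sum_mul]

lemma sum_norm_sq_psiLift (hq₀ : q ≠ 0) (hq : q ^ 2 = κ - 1) (t : ℕ) {g : List ℕ}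
    (hg : WordReduced κ g) (hne : g ≠ []) :
    ∑ j ∈ Finset.range κ, ‖psiLift q a b s φ t g j‖ ^ 2 =
      ‖φ (g.getLast hne)‖ ^ 2 * prob a b s t g.length / ((κ : ℝ) - 1) ^ (g.length - 1) := by
  obtain ⟨p, g, rfl⟩ := List.exists_cons_of_ne_nil hne
  have hp : p ∈ Finset.range κ := Finset.mem_range.2 (wordReduced_cons.1 hg).1
  simp only [psiLift, norm_mul, mul_pow, apply_ite (‖·‖ ^ 2), ← Finset.mul_sum]
  rw [sum_ite_eq_add_card_sub_one_mul hp, Finset.card_range, ← hq, prob, List.length_cons,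
    Nat.add_sub_cancel]
  simp only [norm_div, norm_pow, Complex.norm_real, div_pow, pow_right_comm _ _ 2,
    Real.norm_eq_abs, sq_abs]
  field_simp
  ring

end Lift

section WeightedUniformQubit

variable {κ : ℕ}

lemma sum_phiWU (hκ : 1 < κ) : ∑ j ∈ Finset.range κ, phiWU κ j = 0 := by
  have hω : IsPrimitiveRoot (omega κ) κ := Complex.isPrimitiveRoot_exp κ (by omega)
  simp only [phiWU, ← Finset.sum_div, hω.geom_sum_eq_zero hκ, zero_div]

lemma groverCoin_phiWU (hκ : 1 < κ) {j : ℕ} (hj : j < κ) :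
    groverCoin κ (phiWU κ) j = ((-1 : ℝ) : ℂ) * phiWU κ j := by
  simp [groverCoin_eq hj, sum_phiWU hκ]

lemma sum_norm_sq_phiWU (hκ : κ ≠ 0) : ∑ j ∈ Finset.range κ, ‖phiWU κ j‖ ^ 2 = 1 := by
  have hω : ‖omega κ‖ = 1 := (Complex.isPrimitiveRoot_exp κ hκ).norm'_eq_one hκ
  have hnorm (j : ℕ) : ‖phiWU κ j‖ ^ 2 = (κ : ℝ)⁻¹ := by
    simp [phiWU, hω]
  simp [hnorm, hκ]

end WeightedUniformQubit

theorem grover_tree_weighted_distance_distribution_general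
    (κ : ℕ) (hκ : 2 ≤ κ) (φ : ℕ → ℂ) (s : ℝ) (hφ : ∀ j < κ, groverCoin κ φ j = s * φ j) (a b : ℝ)
    (ha : a = 2 * Real.sqrt ((κ : ℝ) - 1) / κ) (hb : b = ((κ : ℝ) - 2) / κ) (t x : ℕ) :
    ∑ f : Fin x → Fin κ with (List.ofFn fun i ↦ (f i : ℕ)).IsChain (· ≠ ·),
        ∑ j ∈ Finset.range κ, ‖alpha κ φ t (List.ofFn fun i ↦ (f i : ℕ)) j‖ ^ 2 =
      (∑ j ∈ Finset.range κ, ‖φ j‖ ^ 2) * prob a b s t x := by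
  have hκ₁ : (0 : ℝ) < κ - 1 := sub_pos.2 (by exact_mod_cast hκ)
  have hq : Real.sqrt ((κ : ℝ) - 1) ^ 2 = κ - 1 := Real.sq_sqrt hκ₁.le
  have hq₀ : Real.sqrt ((κ : ℝ) - 1) ≠ 0 := (Real.sqrt_pos.2 hκ₁).ne'
  have sum_lift {g : List ℕ} (hg : WordReduced κ g) :
      ∑ j ∈ Finset.range κ, ‖alpha κ φ t g j‖ ^ 2 =
        ∑ j ∈ Finset.range κ, ‖psiLift (Real.sqrt ((κ : ℝ) - 1)) a b s φ t g j‖ ^ 2 :=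
    Finset.sum_congr rfl fun j hj ↦ by
      rw [alpha_eq_psiLift hq₀ hq ha hb hφ t hg (Finset.mem_range.1 hj)]
  cases x with
  | zero => simp [sum_lift wordReduced_nil, sum_norm_sq_psiLift_nil]
  | succ n =>
    have sum_word (f : Fin (n + 1) → Fin κ) (hf : (List.ofFn fun i ↦ (f i : ℕ)).IsChain (· ≠ ·)) :
        ∑ j ∈ Finset.range κ, ‖alpha κ φ t (List.ofFn fun i ↦ (f i : ℕ)) j‖ ^ 2 =
          ‖φ (f (Fin.last n))‖ ^ 2 * prob a b s t (n + 1) / ((κ : ℝ) - 1) ^ n := by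
      have hg := (wordReduced_ofFn_iff f).2 hf
      rw [sum_lift hg, sum_norm_sq_psiLift hq₀ hq t hg (by simp), List.getLast_ofFn_succ,
        List.length_ofFn, Nat.add_sub_cancel]
    rw [Finset.sum_congr rfl fun f hf ↦ sum_word f (Finset.mem_filter.1 hf).2, ← Finset.sum_div,
      ← Finset.sum_mul, sum_wordReduced_last (fun l ↦ ‖φ l‖ ^ 2), nsmul_eq_mul, Nat.cast_pow,
      Nat.cast_sub (by omega), Nat.cast_one]
    field_simp

/-- With the weighted uniform initial qubit `φ^WU` on the tree and the
half-line walk with `s = −1`, the distance distribution of the tree walk equals the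
position distribution of the half-line walk: for all `t` and `x`,
`∑_{|g| = x, g reduced} ∑_{j<κ} |α_t(g, j)|² = P(X_t = x)`.
(Reduced words of length `x` are encoded as functions `Fin x → Fin κ` whose associated
list has no two consecutive equal entries.) -/
theorem grover_tree_weighted_distance_distribution
    (κ : ℕ) (hκ : 3 ≤ κ) (a b : ℝ)
    (ha : a = 2 * Real.sqrt ((κ : ℝ) - 1) / κ) (hb : b = ((κ : ℝ) - 2) / κ)
    (t x : ℕ) :
    ∑ f ∈ Finset.univ.filter
        (fun f : Fin x → Fin κ => (List.ofFn fun i => (f i : ℕ)).IsChain (· ≠ ·)),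
      ∑ j ∈ Finset.range κ,
        ‖alpha κ (phiWU κ) t (List.ofFn fun i => (f i : ℕ)) j‖ ^ 2
      = prob a b (-1) t x := by
  rw [grover_tree_weighted_distance_distribution_general κ (by omega) (phiWU κ) (-1)
    (fun j hj ↦ groverCoin_phiWU (by omega) hj) a b ha hb, sum_norm_sq_phiWU (by omega), one_mul]

end
end

section
/- In Case (B) (s = −1), for every x ∈ ℤ₊ the limit P_*^{(E)}(x) = lim_{t→∞} P(X_{2t} = x) exists and is given by: P_*^{(E)}(0) = ((κ−2)/(κ−1))²; P_*^{(E)}(x) = κ·((κ−2)/(κ−1))²·(1/(κ−1))^x for even x ≥ 2; and P_*^{(E)}(x) = 0 for odd x. -/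
open Filter Topology

noncomputable section

/-!
Record the amplitudes along each light cone `t = x, x + 2, x + 4, …` as a power series in `X`, one
power per pair of steps. To the wave hitting it, the half-line beyond a site is a mirror: the
left-moving series is `w` times the right-moving one, where `w` is the root without constant term
of a quadratic. The discriminant of the quadratic is `(1 - η X) (1 - conj η X)` with
`η = (a + i b) ^ 2` on the unit circle, so `w` has absolutely summable coefficients, and
`w(1) = -1`. At the wall the left-moving series is therefore `1 / (1 + w)` when `s = -1`, with a
simple pole at `X = 1`: multiplication by `1 - X` leaves an absolutely summable series, whose value
at `1` is the limiting amplitude. The recurrences of the walk carry this limit to every site.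
-/

open PowerSeries ComplexConjugate

/-- The Wiener algebra of power series with absolutely summable coefficients: the series that
converge absolutely on the closed unit disc. -/
def wienerAlgebra (R : Type*) [NormedCommRing R] : Subalgebra R R⟦X⟧ where
  carrier := {f | Summable fun n => ‖coeff n f‖}
  mul_mem' hf hg := by
    simpa only [Set.mem_ofPred_eq, coeff_mul] using
      summable_norm_sum_mul_antidiagonal_of_summable_norm hf hg
  add_mem' hf hg :=
    Summable.of_nonneg_of_le (fun _ => norm_nonneg _)
      (fun n => by simpa only [map_add] using norm_add_le _ _) (hf.add hg)
  algebraMap_mem' r :=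
    summable_of_ne_finset_zero (s := {0}) fun n hn => by
      have hn0 : n ≠ 0 := by simpa only [Finset.mem_singleton] using hn
      simp [coeff_C, hn0]

namespace wienerAlgebra

section NormedCommRing

variable {R : Type*} [NormedCommRing R]

theorem mem_iff {f : R⟦X⟧} : f ∈ wienerAlgebra R ↔ Summable fun n => ‖coeff n f‖ :=
  Iff.rfl

theorem X_mem : (PowerSeries.X : R⟦X⟧) ∈ wienerAlgebra R :=
  summable_of_ne_finset_zero (s := {1}) fun n hn => by
    have hn1 : n ≠ 1 := by simpa only [Finset.mem_singleton] using hn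
    simp [coeff_X, hn1]

/-- The indeterminate, as an element of the Wiener algebra. -/
def X : wienerAlgebra R := ⟨PowerSeries.X, X_mem⟩

@[simp]
theorem coe_X : ((X : wienerAlgebra R) : R⟦X⟧) = PowerSeries.X := rfl

variable [CompleteSpace R]

theorem summable_coeff (f : wienerAlgebra R) : Summable fun n => coeff n (f : R⟦X⟧) :=
  f.2.of_norm

/-- Evaluation at `1`, a boundary point of the disc, which is where the limit of the
coefficients of a series `f` with `(1 - X) * f` in the Wiener algebra is read off. -/
def evalOne : wienerAlgebra R →ₐ[R] R where
  toFun f := ∑' n, coeff n (f : R⟦X⟧)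
  map_one' := by
    simp [coeff_one]
  map_mul' f g := by
    simpa only [MulMemClass.coe_mul, coeff_mul] using
      (tsum_mul_tsum_eq_tsum_sum_antidiagonal_of_summable_norm f.2 g.2).symm
  map_zero' := by simp
  map_add' f g := by
    simpa only [AddMemClass.coe_add, map_add] using
      (summable_coeff f).tsum_add (summable_coeff g)
  commutes' r := by
    simp [coeff_C]

theorem evalOne_apply (f : wienerAlgebra R) : evalOne f = ∑' n, coeff n (f : R⟦X⟧) := rfl

@[simp]
theorem evalOne_X : evalOne (X : wienerAlgebra R) = 1 := by
  simp [evalOne_apply, coeff_X]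

theorem tendsto_coeff_of_one_sub_X_mul_eq {f : R⟦X⟧} {g : wienerAlgebra R}
    (h : (1 - PowerSeries.X) * f = (g : R⟦X⟧)) :
    Tendsto (fun n => coeff n f) atTop (𝓝 (evalOne g)) := by
  have coeff_eq_sum (n : ℕ) :
      ∑ i ∈ Finset.range (n + 1), coeff i (g : R⟦X⟧) = coeff n f := by
    induction n with
    | zero => simp [← h, sub_mul]
    | succ n ih =>
      rw [Finset.sum_range_succ, ih, ← h, sub_mul, one_mul, map_sub, coeff_succ_X_mul]
      abel
  have partial_sums := (summable_coeff g).hasSum.tendsto_sum_nat.comp (tendsto_add_atTop_nat 1)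
  exact partial_sums.congr coeff_eq_sum

end NormedCommRing

section RCLike

variable {𝕜 : Type*} [RCLike 𝕜]

theorem map_conj_mem {f : 𝕜⟦X⟧} (hf : f ∈ wienerAlgebra 𝕜) :
    PowerSeries.map (starRingEnd 𝕜) f ∈ wienerAlgebra 𝕜 := by
  simpa only [mem_iff, coeff_map, RCLike.norm_conj] using hf

theorem evalOne_map_conj (f : wienerAlgebra 𝕜) :
    evalOne ⟨PowerSeries.map (starRingEnd 𝕜) f, map_conj_mem f.2⟩ = conj (evalOne f) := by
  simp only [evalOne_apply, coeff_map, RCLike.conj_tsum]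

end RCLike

end wienerAlgebra

theorem sum_range_catalan_div_four_pow (n : ℕ) :
    ∑ i ∈ Finset.range n, (catalan i : ℝ) / 4 ^ i = 2 - 2 * n.centralBinom / 4 ^ n := by
  induction n with
  | zero => simp
  | succ n ih =>
    have h_catalan : ((n : ℝ) + 1) * catalan n = n.centralBinom := by
      exact_mod_cast succ_mul_catalan_eq_centralBinom n
    have h_central : ((n : ℝ) + 1) * (n + 1).centralBinom =
        2 * (2 * n + 1) * n.centralBinom := by
      exact_mod_cast Nat.succ_mul_centralBinom_succ n
    have h_ne : (n : ℝ) + 1 ≠ 0 := by positivity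
    have h_step : ((n + 1).centralBinom : ℝ) = 4 * n.centralBinom - 2 * catalan n :=
      mul_left_cancel₀ h_ne (by linear_combination h_central + 2 * h_catalan)
    rw [Finset.sum_range_succ, ih, h_step, pow_succ]
    field_simp
    ring

theorem summable_catalan_div_four_pow : Summable fun n : ℕ => (catalan n : ℝ) / 4 ^ n := by
  refine summable_of_sum_range_le (c := 2) (fun _ => by positivity) fun n => ?_
  rw [sum_range_catalan_div_four_pow, sub_le_self_iff]
  positivity

/-- The square root `1 - 2 (η / 4) X c((η / 4) X)` of `1 - η X`, where `c` is the generating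
function of the Catalan numbers. -/
def sqrtOneSub {K : Type*} [Field K] (η : K) : K⟦X⟧ :=
  1 - 2 * C (η / 4) * X * rescale (η / 4) (map (Nat.castRingHom K) catalanSeries)

section sqrtOneSub

theorem constantCoeff_sqrtOneSub {K : Type*} [Field K] (η : K) :
    constantCoeff (sqrtOneSub η) = 1 := by
  simp [sqrtOneSub]

theorem sqrtOneSub_sq {K : Type*} [Field K] [CharZero K] (η : K) :
    sqrtOneSub η ^ 2 = 1 - C η * X := by
  have h_catalan := congrArg (fun f => rescale (η / 4) (map (Nat.castRingHom K) f))
    catalanSeries_sq_mul_X_add_one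
  simp only [map_add, map_mul, map_pow, map_one, map_X, rescale_X] at h_catalan
  have h_four : C η = 4 * C (η / 4) := by
    rw [← map_ofNat (C (R := K)) 4, ← map_mul, mul_div_cancel₀ η (by norm_num)]
  rw [sqrtOneSub, h_four]
  linear_combination 4 * C (η / 4) * X * h_catalan

variable {𝕜 : Type*} [RCLike 𝕜] {η : 𝕜}

theorem sqrtOneSub_mem_wienerAlgebra (hη : ‖η‖ ≤ 1) : sqrtOneSub η ∈ wienerAlgebra 𝕜 := by
  have h_catalan :
      rescale (η / 4) (map (Nat.castRingHom 𝕜) catalanSeries) ∈ wienerAlgebra 𝕜 := by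
    rw [wienerAlgebra.mem_iff]
    refine Summable.of_nonneg_of_le (fun _ => norm_nonneg _) (fun n => ?_)
      summable_catalan_div_four_pow
    calc ‖coeff n (rescale (η / 4) (map (Nat.castRingHom 𝕜) catalanSeries))‖
        = ‖η‖ ^ n * (catalan n / 4 ^ n) := by
          simp only [coeff_rescale, div_pow, coeff_map, catalanSeries_coeff, eq_natCast, norm_mul,
            norm_div, norm_pow, RCLike.norm_ofNat, RCLike.norm_natCast]
          ring
      _ ≤ catalan n / 4 ^ n :=
          mul_le_of_le_one_left (by positivity) (pow_le_one₀ (norm_nonneg η) hη)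
  have h_C : C (η / 4) ∈ wienerAlgebra 𝕜 := (wienerAlgebra 𝕜).algebraMap_mem (η / 4)
  exact sub_mem (one_mem _)
    (mul_mem (mul_mem (mul_mem (ofNat_mem _ 2) h_C) wienerAlgebra.X_mem) h_catalan)

theorem exists_wienerAlgebra_sqrt_mul_conj (hη : ‖η‖ ≤ 1) :
    ∃ S : wienerAlgebra 𝕜, constantCoeff (S : 𝕜⟦X⟧) = 1 ∧
      (S : 𝕜⟦X⟧) ^ 2 = (1 - C η * X) * (1 - C (conj η) * X) ∧
      wienerAlgebra.evalOne S = (‖1 - η‖ : 𝕜) := by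
  set s : wienerAlgebra 𝕜 := ⟨sqrtOneSub η, sqrtOneSub_mem_wienerAlgebra hη⟩
  have h_sq : (s : 𝕜⟦X⟧) ^ 2 = 1 - C η * X := sqrtOneSub_sq η
  refine ⟨s * ⟨map (starRingEnd 𝕜) s, wienerAlgebra.map_conj_mem s.2⟩, ?_, ?_, ?_⟩
  · have h_const : constantCoeff (s : 𝕜⟦X⟧) = 1 := constantCoeff_sqrtOneSub η
    rw [MulMemClass.coe_mul, map_mul, h_const, ← coeff_zero_eq_constantCoeff_apply, coeff_map,
      coeff_zero_eq_constantCoeff_apply, h_const, map_one, mul_one]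
  · rw [MulMemClass.coe_mul, mul_pow, ← map_pow, h_sq]
    simp
  · have h_eval : wienerAlgebra.evalOne s ^ 2 = 1 - η := by
      have : s ^ 2 = 1 - algebraMap 𝕜 _ η * wienerAlgebra.X := Subtype.ext h_sq
      rw [← map_pow, this]
      simp
    rw [map_mul, wienerAlgebra.evalOne_map_conj, RCLike.mul_conj, ← h_eval, norm_pow,
      RCLike.ofReal_pow]

end sqrtOneSub

theorem exists_wienerAlgebra_sqrt_discriminant {a b : ℝ} (hb : 0 ≤ b) (hab : a ^ 2 + b ^ 2 = 1) :
    ∃ S : wienerAlgebra ℂ, constantCoeff (S : ℂ⟦X⟧) = 1 ∧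
      (S : ℂ⟦X⟧) ^ 2 = (1 - X) ^ 2 + 4 * C (b : ℂ) ^ 2 * X ∧
      wienerAlgebra.evalOne S = 2 * b := by
  have h_circle : (a : ℂ) ^ 2 + (b : ℂ) ^ 2 = 1 := by exact_mod_cast hab
  set ζ : ℂ := a + b * Complex.I with hζ
  have h_norm : ‖ζ‖ = 1 := by rw [hζ, Complex.norm_add_mul_I, hab, Real.sqrt_one]
  have h_mul : ζ ^ 2 * conj (ζ ^ 2) = 1 := by
    rw [RCLike.mul_conj, norm_pow, h_norm]
    simp
  have h_add : ζ ^ 2 + conj (ζ ^ 2) = 2 - 4 * (b : ℂ) ^ 2 := by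
    have h_conj : conj ζ = a - b * Complex.I := by simp [hζ, sub_eq_add_neg]
    rw [map_pow, h_conj, hζ]
    linear_combination 2 * h_circle + 2 * (b : ℂ) ^ 2 * Complex.I_sq
  have h_dist : ‖1 - ζ ^ 2‖ = 2 * b := by
    have h_factor : 1 - ζ ^ 2 = ((2 * b : ℝ) : ℂ) * -Complex.I * ζ := by
      rw [hζ]
      push_cast
      linear_combination -h_circle + (b : ℂ) ^ 2 * Complex.I_sq
    rw [h_factor, norm_mul, norm_mul, h_norm, norm_neg, Complex.norm_I, Complex.norm_real,
      Real.norm_of_nonneg (by positivity), mul_one, mul_one]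
  obtain ⟨S, hS_const, hS_sq, hS_eval⟩ :=
    exists_wienerAlgebra_sqrt_mul_conj (η := ζ ^ 2) (by rw [norm_pow, h_norm, one_pow])
  refine ⟨S, hS_const, ?_, by rw [hS_eval, h_dist]; norm_num⟩
  have h_mul' := congrArg (C (R := ℂ)) h_mul
  have h_add' := congrArg (C (R := ℂ)) h_add
  simp only [map_mul, map_add, map_sub, map_one, map_ofNat, map_pow] at h_mul' h_add'
  rw [hS_sq]
  simp only [map_pow]
  linear_combination X ^ 2 * h_mul' - X * h_add'

/-- The reflection coefficient `w` of the half-line for the coin parameter `b`, as a power series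
in the variable `X` counting pairs of steps: a right-moving wave entering a half-line from its end
leaves it as a left-moving wave multiplied by `w`. Eliminating the first site from the recurrences
gives the quadratic equation when `a ^ 2 + b ^ 2 = 1`, and the vanishing constant term selects its
root. -/
structure IsReflectionSeries (b : ℂ) (w : ℂ⟦X⟧) : Prop where
  constantCoeff_eq_zero : constantCoeff w = 0
  quadratic_eq : C b * w ^ 2 + (X - 1) * w = C b * X

theorem isReflectionSeries_of_sq_eq_discriminant {b : ℂ} (hb : b ≠ 0) {S : ℂ⟦X⟧}
    (hS_const : constantCoeff S = 1) (hS_sq : S ^ 2 = (1 - X) ^ 2 + 4 * C b ^ 2 * X) :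
    IsReflectionSeries b (C (2 * b)⁻¹ * (1 - X - S)) where
  constantCoeff_eq_zero := by simp [hS_const]
  quadratic_eq := by
    have h_inv : 2 * C b * C (2 * b)⁻¹ = 1 := by
      rw [← map_ofNat (C (R := ℂ)) 2, ← map_mul, ← map_mul,
        mul_inv_cancel₀ (mul_ne_zero two_ne_zero hb), map_one]
    generalize C (2 * b)⁻¹ = d at h_inv
    linear_combination (C b * d ^ 2) * hS_sq
      + (d * ((1 - X) ^ 2 - (1 - X) * S) + C b * X * (2 * C b * d + 1)) * h_inv

theorem exists_isReflectionSeries {a b : ℝ} (hb : 0 < b) (hab : a ^ 2 + b ^ 2 = 1) :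
    ∃ w : wienerAlgebra ℂ, IsReflectionSeries b (w : ℂ⟦X⟧) ∧ wienerAlgebra.evalOne w = -1 := by
  obtain ⟨S, hS_const, hS_sq, hS_eval⟩ := exists_wienerAlgebra_sqrt_discriminant hb.le hab
  have hb' : (b : ℂ) ≠ 0 := by exact_mod_cast hb.ne'
  refine ⟨algebraMap ℂ _ (2 * b)⁻¹ * (1 - wienerAlgebra.X - S),
    isReflectionSeries_of_sq_eq_discriminant hb' hS_const hS_sq, ?_⟩
  rw [map_mul, map_sub, map_sub, map_one, wienerAlgebra.evalOne_X, hS_eval, AlgHom.commutes,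
    Algebra.algebraMap_self_apply, sub_self, zero_sub, mul_neg,
    inv_mul_cancel₀ (mul_ne_zero two_ne_zero hb')]

theorem eq_zero_of_X_mul_succ_dvd {R : Type*} [CommSemiring R] {f : ℕ → R⟦X⟧}
    (h : ∀ x, X * f (x + 1) ∣ f x) (x : ℕ) : f x = 0 := by
  have X_pow_dvd (n : ℕ) : ∀ x, X ^ n ∣ f x := by
    induction n with
    | zero => simp
    | succ n ih =>
      intro x
      rw [pow_succ']
      exact (mul_dvd_mul_left X (ih (x + 1))).trans (h x)
  ext n
  exact X_pow_dvd_iff.mp (X_pow_dvd (n + 1) x) n n.lt_succ_self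

section Walk

variable (a b s : ℝ)

theorem psi_eq_zero_of_lt {t x : ℕ} (h : t < x) : psi a b s t x = 0 := by
  induction t generalizing x with
  | zero => simp [psi, h.ne']
  | succ t ih =>
    have h_right := ih (x := x + 1) (by omega)
    have h_left := ih (x := x - 1) (by omega)
    simp [psi, h_right, h_left, show x ≠ 0 by omega, show x ≠ 1 by omega]

theorem psi_eq_zero_of_odd {t x : ℕ} (h : Odd (t + x)) : psi a b s t x = 0 := by
  induction t generalizing x with
  | zero =>
    have hx : x ≠ 0 := by rintro rfl; simp at h
    simp [psi, hx]
  | succ t ih =>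
    have h_right := ih (x := x + 1) (by convert h using 1; ring)
    rcases x with _ | x
    · simp [psi, h_right]
    · have h_left := ih (x := x) (by rw [Nat.odd_iff] at *; omega)
      rcases x with _ | x <;> simp [psi, h_right, h_left]

/-- The generating function `∑ Ψ^L_{2t+x}(x) X^t` of the left-moving amplitude at the site `x`,
over the times at which the walk can be there. -/
def leftSeries (x : ℕ) : ℂ⟦X⟧ := mk fun t => (psi a b s (2 * t + x) x).1

/-- The generating function `∑ Ψ^R_{2t+x}(x) X^t` of the right-moving amplitude at the site `x`,
over the times at which the walk can be there. -/
def rightSeries (x : ℕ) : ℂ⟦X⟧ := mk fun t => (psi a b s (2 * t + x) x).2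

theorem leftSeries_eq (x : ℕ) :
    leftSeries a b s x = (if x = 0 then 1 else 0) +
      X * (C (a : ℂ) * leftSeries a b s (x + 1) - C (b : ℂ) * rightSeries a b s (x + 1)) := by
  ext t
  rcases t with _ | t
  · rcases x with _ | x
    · simp [leftSeries, psi]
    · simp [leftSeries, psi, psi_eq_zero_of_lt]
  · rw [map_add, coeff_succ_X_mul]
    have h_time : 2 * (t + 1) + x = 2 * t + (x + 1) + 1 := by ring
    split_ifs <;> simp [leftSeries, rightSeries, h_time, psi, coeff_one]

theorem rightSeries_one : rightSeries a b s 1 = C (s : ℂ) * leftSeries a b s 0 := by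
  ext t
  simp [leftSeries, rightSeries, psi]

theorem rightSeries_add_two (x : ℕ) :
    rightSeries a b s (x + 2) =
      C (b : ℂ) * leftSeries a b s (x + 1) + C (a : ℂ) * rightSeries a b s (x + 1) := by
  ext t
  simp [leftSeries, rightSeries, psi]

variable {a b} {w : ℂ⟦X⟧}

theorem leftSeries_eq_add_mul_rightSeries (hab : a ^ 2 + b ^ 2 = 1) (hw : IsReflectionSeries b w)
    (x : ℕ) :
    leftSeries a b s x = (if x = 0 then 1 else 0) + w * rightSeries a b s (x + 1) := by
  have h_circle : C (a : ℂ) ^ 2 + C (b : ℂ) ^ 2 = 1 := by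
    rw [← map_pow, ← map_pow, ← map_add]
    exact_mod_cast congrArg (fun r : ℝ => C (r : ℂ)) hab
  have h_unit : IsUnit (1 - C (b : ℂ) * w) :=
    isUnit_iff_constantCoeff.mpr (by simp [hw.constantCoeff_eq_zero])
  set defect : ℕ → ℂ⟦X⟧ := fun x =>
    leftSeries a b s x - (if x = 0 then 1 else 0) - w * rightSeries a b s (x + 1) with h_defect
  have h_rec (x : ℕ) :
      (1 - C (b : ℂ) * w) * defect x = X * defect (x + 1) * C (a : ℂ) := by
    simp only [h_defect, Nat.add_one_ne_zero, if_false, rightSeries_add_two,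
      leftSeries_eq a b s x]
    linear_combination (X * w * rightSeries a b s (x + 1)) * h_circle
      + rightSeries a b s (x + 1) * hw.quadratic_eq
  have h_zero : defect x = 0 := eq_zero_of_X_mul_succ_dvd
    (fun y => h_unit.dvd_mul_left.mp ⟨C (a : ℂ), h_rec y⟩) x
  linear_combination h_zero

theorem one_sub_mul_leftSeries_zero (hab : a ^ 2 + b ^ 2 = 1) (hw : IsReflectionSeries b w) :
    (1 - C (s : ℂ) * w) * leftSeries a b s 0 = 1 := by
  have h := leftSeries_eq_add_mul_rightSeries s hab hw 0
  rw [if_pos rfl, zero_add, rightSeries_one] at h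
  linear_combination h

theorem one_sub_X_mul_leftSeries_zero (hab : a ^ 2 + b ^ 2 = 1) (hw : IsReflectionSeries b w) :
    (1 + C (b : ℂ)) * ((1 - X) * leftSeries a b (-1) 0) = 1 + C (b : ℂ) - X - C (b : ℂ) * w := by
  have h := one_sub_mul_leftSeries_zero (-1) hab hw
  rw [Complex.ofReal_neg, Complex.ofReal_one, map_neg, map_one] at h
  linear_combination (1 + C (b : ℂ) - X - C (b : ℂ) * w) * h
    + leftSeries a b (-1) 0 * hw.quadratic_eq

theorem tendsto_psi_fst_zero (hb : 0 < b) (hab : a ^ 2 + b ^ 2 = 1) :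
    Tendsto (fun t : ℕ => (psi a b (-1) (2 * t) 0).1) atTop (𝓝 (2 * b / (1 + b) : ℝ)) := by
  obtain ⟨w, hw, hw_eval⟩ := exists_isReflectionSeries hb hab
  have hb1 : (1 + b : ℂ) ≠ 0 := by exact_mod_cast (by positivity : 1 + b ≠ 0)
  set c : ℂ := (1 + b : ℂ)⁻¹ with hc
  have h_inv : C c * (1 + C (b : ℂ)) = 1 := by
    rw [← map_one C, ← map_add, ← map_mul, inv_mul_cancel₀ hb1]
  let g : wienerAlgebra ℂ := 1 - algebraMap ℂ _ c * (wienerAlgebra.X + algebraMap ℂ _ (b : ℂ) * w)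
  have h_series : (1 - X) * leftSeries a b (-1) 0 = (g : ℂ⟦X⟧) := by
    change _ = 1 - C c * (X + C (b : ℂ) * (w : ℂ⟦X⟧))
    linear_combination C c * one_sub_X_mul_leftSeries_zero hab hw
      + (1 - (1 - X) * leftSeries a b (-1) 0) * h_inv
  have h_eval : wienerAlgebra.evalOne g = (2 * b / (1 + b) : ℝ) := by
    simp only [g, map_sub, map_one, map_mul, map_add, AlgHom.commutes, wienerAlgebra.evalOne_X,
      hw_eval, Algebra.algebraMap_self_apply, hc]
    push_cast
    field_simp
    ring
  rw [← h_eval]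
  exact (wienerAlgebra.tendsto_coeff_of_one_sub_X_mul_eq h_series).congr fun t => by
    simp [leftSeries]

theorem tendsto_psi_fst_succ (ha : a ≠ 0) {x : ℕ} {l r : ℂ}
    (hl : Tendsto (fun t : ℕ => (psi a b s (2 * t + x) x).1) atTop (𝓝 l))
    (hr : Tendsto (fun t : ℕ => (psi a b s (2 * t + (x + 1)) (x + 1)).2) atTop (𝓝 r)) :
    Tendsto (fun t : ℕ => (psi a b s (2 * t + (x + 1)) (x + 1)).1) atTop
      (𝓝 ((l + b * r) / a)) := by
  have ha' : (a : ℂ) ≠ 0 := by exact_mod_cast ha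
  refine (((hl.comp (tendsto_add_atTop_nat 1)).add (hr.const_mul (b : ℂ))).div_const
    (a : ℂ)).congr fun t => ?_
  rw [Function.comp_apply, show 2 * (t + 1) + x = 2 * t + (x + 1) + 1 by ring, div_eq_iff ha']
  simp [psi, mul_comm]

theorem tendsto_psi_snd_add_two {x : ℕ} {l r : ℂ}
    (hl : Tendsto (fun t : ℕ => (psi a b s (2 * t + (x + 1)) (x + 1)).1) atTop (𝓝 l))
    (hr : Tendsto (fun t : ℕ => (psi a b s (2 * t + (x + 1)) (x + 1)).2) atTop (𝓝 r)) :
    Tendsto (fun t : ℕ => (psi a b s (2 * t + (x + 2)) (x + 2)).2) atTop (𝓝 (b * l + a * r)) :=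
  ((hl.const_mul (b : ℂ)).add (hr.const_mul (a : ℂ))).congr fun t => by simp [psi]

theorem tendsto_psi_lightCone (ha : a ≠ 0) (hb : 0 < b) (hab : a ^ 2 + b ^ 2 = 1) (x : ℕ) :
    Tendsto (fun t : ℕ => (psi a b (-1) (2 * t + x) x).1) atTop
      (𝓝 (2 * b / (1 + b) * (a / (1 + b)) ^ x : ℝ)) ∧
    Tendsto (fun t : ℕ => (psi a b (-1) (2 * t + (x + 1)) (x + 1)).2) atTop
      (𝓝 (-(2 * b / (1 + b) * (a / (1 + b)) ^ x) : ℝ)) := by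
  induction x with
  | zero =>
    have h := tendsto_psi_fst_zero hb hab
    refine ⟨by simpa only [add_zero, pow_zero, mul_one] using h, ?_⟩
    rw [pow_zero, mul_one, Complex.ofReal_neg]
    exact h.neg.congr fun t => by simp [psi]
  | succ x ih =>
    obtain ⟨ih_left, ih_right⟩ := ih
    have hb1 : 1 + b ≠ 0 := by positivity
    rw [pow_succ, ← mul_assoc]
    generalize 2 * b / (1 + b) * (a / (1 + b)) ^ x = l at ih_left ih_right ⊢
    have h_left_eq : (l + b * -l) / a = l * (a / (1 + b)) := by
      field_simp
      linear_combination -l * hab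
    have h_right_eq : b * (l * (a / (1 + b))) + a * -l = -(l * (a / (1 + b))) := by
      field_simp
      ring
    have h_left : Tendsto (fun t : ℕ => (psi a b (-1) (2 * t + (x + 1)) (x + 1)).1) atTop
        (𝓝 (l * (a / (1 + b)) : ℝ)) := by
      rw [← h_left_eq, Complex.ofReal_div, Complex.ofReal_add, Complex.ofReal_mul]
      exact tendsto_psi_fst_succ (-1) ha ih_left ih_right
    refine ⟨h_left, ?_⟩
    rw [← h_right_eq, Complex.ofReal_add, Complex.ofReal_mul b, Complex.ofReal_mul a]
    exact tendsto_psi_snd_add_two (-1) h_left ih_right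

theorem tendsto_prob_zero (hb : 0 < b) (hab : a ^ 2 + b ^ 2 = 1) :
    Tendsto (fun t : ℕ => prob a b (-1) (2 * t) 0) atTop (𝓝 ((2 * b / (1 + b)) ^ 2)) := by
  have h := (tendsto_psi_fst_zero hb hab).norm.pow 2
  rw [Complex.norm_real, Real.norm_eq_abs, sq_abs] at h
  refine h.congr fun t => ?_
  have h_right : (psi a b (-1) (2 * t) 0).2 = 0 := by cases t <;> simp [psi, Nat.mul_succ]
  simp [prob, h_right]

theorem tendsto_prob_lightCone_succ (ha : a ≠ 0) (hb : 0 < b) (hab : a ^ 2 + b ^ 2 = 1)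
    (x : ℕ) :
    Tendsto (fun t : ℕ => prob a b (-1) (2 * t + (x + 1)) (x + 1)) atTop
      (𝓝 (2 / (1 - b) * (2 * b / (1 + b)) ^ 2 * ((1 - b) / (1 + b)) ^ (x + 1))) := by
  have hb1 : 1 + b ≠ 0 := by positivity
  have hb2 : 1 - b ≠ 0 := by
    rintro h
    exact ha (pow_eq_zero_iff two_ne_zero |>.mp (by linear_combination hab + (1 + b) * h))
  have h_ratio : (a / (1 + b)) ^ 2 = (1 - b) / (1 + b) := by
    field_simp
    linear_combination hab
  have h_ratio_pow (n : ℕ) : ((a / (1 + b)) ^ n) ^ 2 = ((1 - b) / (1 + b)) ^ n := by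
    rw [pow_right_comm, h_ratio]
  have h := ((tendsto_psi_lightCone ha hb hab (x + 1)).1.norm.pow 2).add
    ((tendsto_psi_lightCone ha hb hab x).2.norm.pow 2)
  simp only [Complex.norm_real, Real.norm_eq_abs, sq_abs] at h
  have h_lim : (2 * b / (1 + b) * (a / (1 + b)) ^ (x + 1)) ^ 2
        + (-(2 * b / (1 + b) * (a / (1 + b)) ^ x)) ^ 2
      = 2 / (1 - b) * (2 * b / (1 + b)) ^ 2 * ((1 - b) / (1 + b)) ^ (x + 1) := by
    rw [neg_sq, mul_pow, mul_pow, h_ratio_pow, h_ratio_pow, pow_succ _ x]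
    generalize ((1 - b) / (1 + b)) ^ x = u
    field_simp
    ring
  rw [h_lim] at h
  exact h

end Walk

theorem half_line_caseB_even_time_localization_general {a b : ℝ} (hb0 : 0 < b) (hb1 : b < 1)
    (hab : a ^ 2 + b ^ 2 = 1) (x : ℕ) :
    Tendsto (fun t : ℕ => prob a b (-1) (2 * t) x) atTop
      (𝓝 (if x = 0 then (2 * b / (1 + b)) ^ 2
        else if Even x then 2 / (1 - b) * (2 * b / (1 + b)) ^ 2 * ((1 - b) / (1 + b)) ^ x
        else 0)) := by
  split_ifs with h_zero h_even
  · subst h_zero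
    exact tendsto_prob_zero hb0 hab
  · have ha : a ≠ 0 := by rintro rfl; nlinarith
    obtain ⟨y, rfl⟩ := Nat.exists_eq_succ_of_ne_zero h_zero
    obtain ⟨m, hm⟩ := h_even
    rw [← tendsto_add_atTop_iff_nat m]
    refine (tendsto_prob_lightCone_succ ha hb0 hab y).congr fun t => ?_
    rw [show 2 * (t + m) = 2 * t + (y + 1) by omega]
  · have h_odd : Odd x := Nat.not_even_iff_odd.mp h_even
    refine tendsto_const_nhds.congr fun t => ?_
    simp [prob, psi_eq_zero_of_odd a b (-1) ((even_two_mul t).add_odd h_odd)]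

section GroverCoin

variable {κ : ℝ}

theorem grover_coin_sq_add_sq (hκ : 1 ≤ κ) : (2 * √(κ - 1) / κ) ^ 2 + ((κ - 2) / κ) ^ 2 = 1 := by
  have hκ0 : κ ≠ 0 := by positivity
  rw [div_pow, mul_pow, Real.sq_sqrt (sub_nonneg.mpr hκ)]
  field_simp
  ring

theorem two_div_one_sub_grover_coin (hκ : κ ≠ 0) : 2 / (1 - (κ - 2) / κ) = κ := by
  field_simp
  ring

theorem two_mul_grover_coin_div_one_add (hκ : 1 < κ) :
    2 * ((κ - 2) / κ) / (1 + (κ - 2) / κ) = (κ - 2) / (κ - 1) := by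
  have hκ0 : κ ≠ 0 := by positivity
  have hκ1 : κ - 1 ≠ 0 := (sub_pos.mpr hκ).ne'
  have h_sum : 1 + (κ - 2) / κ = 2 * (κ - 1) / κ := by field_simp; ring
  rw [h_sum]
  field_simp

theorem one_sub_grover_coin_div_one_add (hκ : 1 < κ) :
    (1 - (κ - 2) / κ) / (1 + (κ - 2) / κ) = 1 / (κ - 1) := by
  have hκ0 : κ ≠ 0 := by positivity
  have hκ1 : κ - 1 ≠ 0 := (sub_pos.mpr hκ).ne'
  have h_sum : 1 + (κ - 2) / κ = 2 * (κ - 1) / κ := by field_simp; ring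
  rw [h_sum]
  field_simp
  ring

end GroverCoin

/-- In Case (B) (`s = −1`), for every `x ∈ ℤ₊` the limit
`P_*^{(E)}(x) = lim_{t→∞} P(X_{2t} = x)` exists and equals `((κ−2)/(κ−1))²` at `x = 0`,
`κ·((κ−2)/(κ−1))²·(1/(κ−1))^x` for even `x ≥ 2`, and `0` for odd `x`. -/
theorem half_line_caseB_even_time_localization
    (κ : ℕ) (hκ : 3 ≤ κ) (a b : ℝ)
    (ha : a = 2 * Real.sqrt ((κ : ℝ) - 1) / κ) (hb : b = ((κ : ℝ) - 2) / κ)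
    (x : ℕ) :
    Tendsto (fun t : ℕ => prob a b (-1) (2 * t) x) atTop
      (𝓝 (if x = 0 then (((κ : ℝ) - 2) / ((κ : ℝ) - 1)) ^ 2
        else if Even x then
          (κ : ℝ) * (((κ : ℝ) - 2) / ((κ : ℝ) - 1)) ^ 2 * (1 / ((κ : ℝ) - 1)) ^ x
        else 0)) := by
  have hκ' : (3 : ℝ) ≤ κ := by exact_mod_cast hκ
  have hb0 : 0 < ((κ : ℝ) - 2) / κ := div_pos (by linarith) (by linarith)
  have hb1 : ((κ : ℝ) - 2) / κ < 1 := (div_lt_one (by linarith)).mpr (by linarith)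
  subst ha hb
  simpa only [two_mul_grover_coin_div_one_add (κ := κ) (by linarith),
    two_div_one_sub_grover_coin (κ := κ) (by linarith),
    one_sub_grover_coin_div_one_add (κ := κ) (by linarith)]
    using half_line_caseB_even_time_localization_general hb0 hb1
      (grover_coin_sq_add_sq (by linarith)) x

end
end
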